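/- Let f be an indefinite ternary anisotropic quadratic form over ℚ. Then there exist infinitely many positive rational numbers and infinitely many negative rational numbers that are not represented by f over ℚ. -/

import Mathlib

open Matrix

/-! Diagonalise the form as `a x² + b y² + c z²` and put `d = -abc`. Over any field, such a form
which represents `d s²` with `s ≠ 0` is isotropic: `a (a x² + b y² + c z² - d s²)` is a norm from
the quaternion algebra `(-ab, -ac)`, and a quaternion algebra with a nonzero element of norm zero
is split. By Legendre's theorem an anisotropic indefinite form over `ℚ` stays anisotropic over
some `ℚ_p`, so it represents no rational number in `d (ℚ_p^*)²`. Both `d` and `d (1 - 4p)` lie in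
this class, as `1 + 4u = (1 + 2t)²` whenever `t² + t = u`, and they have opposite signs.
Multiplying them by rational squares gives infinitely many values of each sign.
-/

open QuadraticMap (weightedSumSquares weightedSumSquares_apply)

/-! ### Hilbert symbols -/

section Field

variable {K : Type*} [Field K] {a b c t : K}

/-- The Hilbert symbol `(a, b)` over `K` is `1`: the conic `x² = a y² + b z²` has a `K`-rational
point. The coefficients may vanish, in which case there always is one. -/
def IsHilbertTrivial (a b : K) : Prop :=
  ∃ x y z : K, (x, y, z) ≠ 0 ∧ x ^ 2 = a * y ^ 2 + b * z ^ 2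

namespace IsHilbertTrivial

lemma symm (h : IsHilbertTrivial a b) : IsHilbertTrivial b a := by
  obtain ⟨x, y, z, h0, h⟩ := h
  exact ⟨x, z, y, by simpa [and_comm] using h0, by rw [h, add_comm]⟩

lemma of_isSquare_left (ha : IsSquare a) : IsHilbertTrivial a b := by
  obtain ⟨s, rfl⟩ := ha
  exact ⟨s, 1, 0, by simp, by ring⟩

lemma mul_sq_right_iff (ht : t ≠ 0) : IsHilbertTrivial a (b * t ^ 2) ↔ IsHilbertTrivial a b := by
  constructor
  · rintro ⟨x, y, z, h0, h⟩
    exact ⟨x, y, t * z, by simpa [ht] using h0, by rw [h]; ring⟩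
  · rintro ⟨x, y, z, h0, h⟩
    exact ⟨x, y, z / t, by simpa [ht] using h0, by rw [h]; field_simp⟩

lemma mul_sq_left_iff (ht : t ≠ 0) : IsHilbertTrivial (a * t ^ 2) b ↔ IsHilbertTrivial a b :=
  ⟨fun h ↦ ((mul_sq_right_iff ht).1 h.symm).symm, fun h ↦ ((mul_sq_right_iff ht).2 h.symm).symm⟩

/-- Multiply `x + y √a`, whose norm is `b z²`, by `t + √a`, whose norm is `b c`. -/
lemma of_sq_sub_eq_mul (hb : b ≠ 0) (hc : c ≠ 0) (ht : t ^ 2 - a = b * c)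
    (h : IsHilbertTrivial a b) : IsHilbertTrivial a c := by
  obtain ⟨x, y, z, h0, h⟩ := h
  refine ⟨x * t + a * y, x + t * y, b * z, fun hzero ↦ h0 ?_, ?_⟩
  · simp only [Prod.mk_eq_zero, mul_eq_zero, hb, false_or] at hzero
    obtain ⟨h1, h2, hz⟩ := hzero
    have hy : y = 0 := by
      have : b * c * y = 0 := by linear_combination t * h2 - h1 - y * ht
      simpa [hb, hc] using this
    have hx : x = 0 := by simpa [hy] using h2
    simp [hx, hy, hz]
  · linear_combination (t ^ 2 - a) * h + b * z ^ 2 * ht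

lemma iff_of_sq_sub_eq_mul (hb : b ≠ 0) (hc : c ≠ 0) (ht : t ^ 2 - a = b * c) :
    IsHilbertTrivial a b ↔ IsHilbertTrivial a c :=
  ⟨of_sq_sub_eq_mul hb hc ht, of_sq_sub_eq_mul hc hb (ht.trans (mul_comm b c))⟩

/-- The hypothesis says that the quaternion `x + y i + z j + s ij` with `i² = a`, `j² = b` has norm
zero. -/
lemma of_quaternion_norm_eq_zero {x y z s : K} (hs : s ≠ 0)
    (h : x ^ 2 - a * y ^ 2 - b * z ^ 2 + a * b * s ^ 2 = 0) : IsHilbertTrivial a b := by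
  by_cases hw : z ^ 2 - a * s ^ 2 = 0
  · exact ⟨z, s, 0, by simp [hs], by linear_combination hw⟩
  · exact ⟨x * z + a * y * s, x * s + y * z, z ^ 2 - a * s ^ 2, by simp [hw],
      by linear_combination (z ^ 2 - a * s ^ 2) * h⟩

end IsHilbertTrivial

end Field

section OrderedField

variable {K : Type*} [Field K] [LinearOrder K] [IsStrictOrderedRing K] {a b : K}

lemma IsHilbertTrivial.nonneg_or_nonneg (h : IsHilbertTrivial a b) : 0 ≤ a ∨ 0 ≤ b := by
  by_contra! hneg
  obtain ⟨x, y, z, h0, h⟩ := h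
  have hy : a * y ^ 2 ≤ 0 := mul_nonpos_of_nonpos_of_nonneg hneg.1.le (sq_nonneg y)
  have hz : b * z ^ 2 ≤ 0 := mul_nonpos_of_nonpos_of_nonneg hneg.2.le (sq_nonneg z)
  have hx := sq_nonneg x
  have hx0 : x ^ 2 = 0 := by linarith
  have hy0 : a * y ^ 2 = 0 := by linarith
  have hz0 : b * z ^ 2 = 0 := by linarith
  simp_all [hneg.1.ne, hneg.2.ne]

end OrderedField

lemma isHilbertTrivial_real_iff {a b : ℝ} : IsHilbertTrivial a b ↔ 0 ≤ a ∨ 0 ≤ b := by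
  refine ⟨IsHilbertTrivial.nonneg_or_nonneg, ?_⟩
  rintro (ha | hb)
  · exact .of_isSquare_left (Real.isSquare_iff.2 ha)
  · exact (IsHilbertTrivial.of_isSquare_left (Real.isSquare_iff.2 hb)).symm

/-! ### Squares modulo integers and `p`-adic squares -/

lemma isSquare_intCast_zmod_mul {a : ℤ} {m n : ℕ} (hmn : m.Coprime n)
    (hm : IsSquare (a : ZMod m)) (hn : IsSquare (a : ZMod n)) : IsSquare (a : ZMod (m * n)) := by
  obtain ⟨x, hx⟩ := hm
  obtain ⟨y, hy⟩ := hn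
  have h : IsSquare (a : ZMod m × ZMod n) := ⟨(x, y), Prod.ext hx hy⟩
  simpa using h.map (ZMod.chineseRemainder hmn).symm

lemma isSquare_intCast_zmod_of_squarefree {a : ℤ} {n : ℕ} (hn : Squarefree n)
    (h : ∀ p : ℕ, p.Prime → p ∣ n → IsSquare (a : ZMod p)) : IsSquare (a : ZMod n) := by
  induction n using induction_on_primes with
  | zero => simp at hn
  | one => exact ⟨0, Subsingleton.elim _ _⟩
  | prime_mul p m hp ih =>
    obtain ⟨hpm, -, hm⟩ := Nat.squarefree_mul_iff.1 hn
    exact isSquare_intCast_zmod_mul hpm (h p hp (dvd_mul_right p m))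
      (ih hm fun q hq hqm ↦ h q hq (hqm.mul_left p))

section Henselian

open Polynomial

lemma isSquare_one_add_four_mul {R : Type*} [CommRing R] {I : Ideal R} [HenselianRing R I] {u : R}
    (hu : u ∈ I) : IsSquare (1 + 4 * u) := by
  have hmonic : (X ^ 2 + X - C u : R[X]).Monic := by monicity!
  obtain ⟨t, ht, -⟩ := HenselianRing.is_henselian (I := I) _ hmonic 0 (by simpa using hu) (by simp)
  simp only [IsRoot, eval_sub, eval_add, eval_pow, eval_X, eval_C] at ht
  exact ⟨1 + 2 * t, by linear_combination -4 * ht⟩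

end Henselian

section Padic

variable {p : ℕ} [Fact p.Prime]

lemma isSquare_padic_one_sub_four_mul : IsSquare (1 - 4 * (p : ℚ_[p])) := by
  have hp : -(p : ℤ_[p]) ∈ IsLocalRing.maximalIdeal ℤ_[p] :=
    neg_mem ((IsLocalRing.mem_maximalIdeal _).2 PadicInt.p_nonunit)
  have h : IsSquare ((1 + 4 * -(p : ℤ_[p]) : ℤ_[p]) : ℚ_[p]) :=
    (isSquare_one_add_four_mul hp).map PadicInt.Coe.ringHom
  push_cast at h
  rwa [mul_neg, ← sub_eq_add_neg] at h

lemma toZMod_eq_zero_iff_dvd {x : ℤ_[p]} : PadicInt.toZMod x = 0 ↔ (p : ℤ_[p]) ∣ x := by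
  rw [← RingHom.mem_ker, PadicInt.ker_toZMod, PadicInt.maximalIdeal_eq_span_p,
    Ideal.mem_span_singleton]

lemma exists_padicInt_primitive_multiple {ι : Type*} [Finite ι] {v : ι → ℚ_[p]} (hv : v ≠ 0) :
    ∃ (c : ℚ_[p]) (u : ι → ℤ_[p]), c ≠ 0 ∧ (∃ i, u i = 1) ∧ ∀ j, v j = c * u j := by
  obtain ⟨k, hk⟩ := Function.ne_iff.1 hv
  have : Nonempty ι := ⟨k⟩
  obtain ⟨i, hi⟩ := Finite.exists_max fun j ↦ ‖v j‖
  have hi0 : 0 < ‖v i‖ := (norm_pos_iff.2 hk).trans_le (hi k)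
  have hvi : v i ≠ 0 := norm_pos_iff.1 hi0
  refine ⟨v i, fun j ↦ ⟨v j / v i, ?_⟩, hvi, ⟨i, Subtype.ext (div_self hvi)⟩, fun j ↦ ?_⟩
  · rw [norm_div]
    exact div_le_one_of_le₀ (hi j) hi0.le
  · exact (mul_div_cancel₀ (v j) hvi).symm

lemma IsHilbertTrivial.exists_padicInt_primitive {a b : ℤ_[p]}
    (h : IsHilbertTrivial (a : ℚ_[p]) b) :
    ∃ x y z : ℤ_[p], (x = 1 ∨ y = 1 ∨ z = 1) ∧ x ^ 2 = a * y ^ 2 + b * z ^ 2 := by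
  obtain ⟨x, y, z, h0, h⟩ := h
  have hv : ![x, y, z] ≠ 0 := by simpa using h0
  obtain ⟨c, u, hc, hu, hcu⟩ := exists_padicInt_primitive_multiple hv
  refine ⟨u 0, u 1, u 2, by simpa [Fin.exists_fin_succ] using hu, ?_⟩
  obtain ⟨rfl, rfl, rfl⟩ : x = c * u 0 ∧ y = c * u 1 ∧ z = c * u 2 := ⟨hcu 0, hcu 1, hcu 2⟩
  apply PadicInt.ext
  apply mul_left_cancel₀ (pow_ne_zero 2 hc)
  push_cast
  linear_combination h

lemma IsHilbertTrivial.isSquare_toZMod {a b : ℤ_[p]} (h : IsHilbertTrivial (a : ℚ_[p]) b)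
    (hpb : (p : ℤ_[p]) ∣ b) (hppb : ¬ (p : ℤ_[p]) ^ 2 ∣ b) : IsSquare (PadicInt.toZMod a) := by
  obtain ⟨x, y, z, h1, h⟩ := h.exists_padicInt_primitive
  have hpp : Prime (p : ℤ_[p]) := PadicInt.prime_p
  have hmod : PadicInt.toZMod x ^ 2 = PadicInt.toZMod a * PadicInt.toZMod y ^ 2 := by
    simpa [toZMod_eq_zero_iff_dvd.2 hpb] using congrArg PadicInt.toZMod h
  suffices hy : PadicInt.toZMod y ≠ 0 from
    ⟨PadicInt.toZMod x / PadicInt.toZMod y, by field_simp; exact hmod.symm⟩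
  intro hy
  have hx : PadicInt.toZMod x = 0 := by simpa [hy] using hmod
  rw [toZMod_eq_zero_iff_dvd] at hx hy
  have hbz : (p : ℤ_[p]) ^ 2 ∣ b * z ^ 2 :=
    (dvd_add_right ((pow_dvd_pow_of_dvd hy 2).mul_left a)).1 (h ▸ pow_dvd_pow_of_dvd hx 2)
  have hz : (p : ℤ_[p]) ∣ z := by
    by_contra hz
    exact hppb (hpp.pow_dvd_of_dvd_mul_right 2 (mt hpp.dvd_of_dvd_pow hz) hbz)
  rcases h1 with rfl | rfl | rfl
  exacts [hpp.not_isUnit (isUnit_of_dvd_one hx), hpp.not_isUnit (isUnit_of_dvd_one hy),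
    hpp.not_isUnit (isUnit_of_dvd_one hz)]

end Padic

/-! ### Legendre's theorem -/

/-- The Hilbert symbol `(a, b)` is `1` at every place of `ℚ`. -/
def IsLocallyHilbertTrivial (a b : ℚ) : Prop :=
  IsHilbertTrivial (a : ℝ) b ∧ ∀ (p : ℕ) [Fact p.Prime], IsHilbertTrivial (a : ℚ_[p]) b

namespace IsLocallyHilbertTrivial

lemma symm {a b : ℚ} (h : IsLocallyHilbertTrivial a b) : IsLocallyHilbertTrivial b a :=
  ⟨h.1.symm, fun p _ ↦ (h.2 p).symm⟩

lemma imp {a b a' b' : ℚ} (h : IsLocallyHilbertTrivial a b)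
    (himp : ∀ (K : Type) [Field K] [CharZero K],
      IsHilbertTrivial (a : K) b → IsHilbertTrivial (a' : K) b') :
    IsLocallyHilbertTrivial a' b' :=
  ⟨himp ℝ h.1, fun p _ ↦ himp ℚ_[p] (h.2 p)⟩

lemma isSquare_zmod_of_squarefree {a b : ℤ} (hb : Squarefree b)
    (h : IsLocallyHilbertTrivial a b) : IsSquare (a : ZMod b.natAbs) := by
  refine isSquare_intCast_zmod_of_squarefree (Int.squarefree_natAbs.2 hb) fun p hp hpb ↦ ?_
  have : Fact p.Prime := ⟨hp⟩
  have hpb' : (p : ℤ_[p]) ∣ (b : ℤ_[p]) := by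
    simpa using (PadicInt.pow_p_dvd_int_iff 1 b).2 (by simpa using Int.natCast_dvd.2 hpb)
  have hppb : ¬ (p : ℤ_[p]) ^ 2 ∣ (b : ℤ_[p]) := by
    rw [PadicInt.pow_p_dvd_int_iff, sq]
    exact fun hdvd ↦ (Nat.prime_iff_prime_int.1 hp).not_isUnit (hb _ hdvd)
  have htriv : IsHilbertTrivial ((a : ℤ_[p]) : ℚ_[p]) (b : ℤ_[p]) := by simpa using h.2 p
  simpa using htriv.isSquare_toZMod hpb' hppb

end IsLocallyHilbertTrivial

lemma exists_sq_sub_eq_mul_natAbs_lt {a b : ℤ} (hab : a.natAbs ≤ b.natAbs) (hb : 2 ≤ b.natAbs)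
    (ha : IsSquare (a : ZMod b.natAbs)) : ∃ t c : ℤ, t ^ 2 - a = b * c ∧ c.natAbs < b.natAbs := by
  obtain ⟨r, hr⟩ := ha
  have : NeZero b.natAbs := ⟨by omega⟩
  have hdvd : b ∣ r.valMinAbs ^ 2 - a := by
    rw [← Int.natAbs_dvd, ← ZMod.intCast_zmod_eq_zero_iff_dvd]
    simp [hr, pow_two]
  obtain ⟨c, hc⟩ := hdvd
  refine ⟨r.valMinAbs, c, hc, ?_⟩
  have ht : 2 * r.valMinAbs.natAbs ≤ b.natAbs := by
    have := r.natAbs_valMinAbs_le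
    omega
  have hbc : b.natAbs * c.natAbs ≤ r.valMinAbs.natAbs ^ 2 + a.natAbs := by
    rw [← Int.natAbs_mul, ← hc, ← Int.natAbs_pow]
    exact Int.natAbs_sub_le _ _
  by_contra! hle
  have hbb : b.natAbs * b.natAbs ≤ b.natAbs * c.natAbs := Nat.mul_le_mul_left _ hle
  have h2b : 2 * b.natAbs ≤ b.natAbs * b.natAbs := Nat.mul_le_mul_right _ hb
  have htt := Nat.mul_le_mul ht ht
  linarith

namespace IsLocallyHilbertTrivial

/-- Legendre's descent: an everywhere trivial symbol `(a, b)` makes `a` a square modulo `b`, and a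
root `t` of size at most `|b| / 2` trades `b` for the cofactor `c` in `t² - a = b c`. -/
lemma isSquare_or_exists_natAbs_lt {a b : ℤ} (hb2 : 2 ≤ b.natAbs) (hab : a.natAbs ≤ b.natAbs)
    (h : IsLocallyHilbertTrivial a b) :
    IsSquare a ∨ ∃ c : ℤ, c ≠ 0 ∧ c.natAbs < b.natAbs ∧
      ∀ (K : Type) [Field K] [CharZero K],
        IsHilbertTrivial (a : K) b ↔ IsHilbertTrivial (a : K) c := by
  have hb : b ≠ 0 := by omega
  by_cases hsq : Squarefree b
  · obtain ⟨t, c, htc, hlt⟩ := exists_sq_sub_eq_mul_natAbs_lt hab hb2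
      (h.isSquare_zmod_of_squarefree hsq)
    rcases eq_or_ne c 0 with rfl | hc
    · exact .inl ⟨t, by linear_combination -htc⟩
    · refine .inr ⟨c, hc, hlt, fun K _ _ ↦ ?_⟩
      exact IsHilbertTrivial.iff_of_sq_sub_eq_mul (t := (t : K)) (by exact_mod_cast hb)
        (by exact_mod_cast hc) (by exact_mod_cast htc)
  · simp only [Squarefree, not_forall] at hsq
    obtain ⟨m, ⟨c, rfl⟩, hm⟩ := hsq
    obtain ⟨hm0, hc⟩ : m ≠ 0 ∧ c ≠ 0 := by simpa using hb
    refine .inr ⟨c, hc, ?_, fun K _ _ ↦ ?_⟩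
    · have hm2 : 1 < m.natAbs := by
        rw [Int.isUnit_iff_natAbs_eq] at hm
        omega
      rw [Int.natAbs_mul, Int.natAbs_mul]
      exact lt_mul_left (Int.natAbs_pos.2 hc) (one_lt_mul'' hm2 hm2)
    · rw [← IsHilbertTrivial.mul_sq_right_iff (b := (c : K)) (Int.cast_ne_zero.2 hm0)]
      push_cast
      rw [mul_comm (c : K), sq]

lemma isHilbertTrivial_intCast {a b : ℤ} (ha : a ≠ 0) (hb : b ≠ 0)
    (h : IsLocallyHilbertTrivial a b) : IsHilbertTrivial (a : ℚ) b := by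
  induction hn : a.natAbs + b.natAbs using Nat.strong_induction_on generalizing a b with
  | _ n ih =>
    wlog hab : a.natAbs ≤ b.natAbs generalizing a b
    · exact (this hb ha h.symm (by omega) (by omega)).symm
    rcases Nat.lt_or_ge b.natAbs 2 with hb1 | hb2
    · have hsign : 0 ≤ a ∨ 0 ≤ b := by simpa using h.1.nonneg_or_nonneg
      obtain rfl | rfl : a = 1 ∨ b = 1 := by omega
      · exact .of_isSquare_left (by simp)
      · exact (IsHilbertTrivial.of_isSquare_left (by simp)).symm
    · obtain hsq | ⟨c, hc, hlt, hiff⟩ := h.isSquare_or_exists_natAbs_lt hb2 hab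
      · exact .of_isSquare_left (by simpa using hsq.map (Int.castRingHom ℚ))
      · have hac : IsLocallyHilbertTrivial a c :=
          h.imp fun K _ _ hK ↦ by simpa using (hiff K).1 (by simpa using hK)
        exact (hiff ℚ).2 (ih _ (by omega) ha hc hac rfl)

end IsLocallyHilbertTrivial

lemma num_mul_den_eq_mul_den_sq (q : ℚ) : ((q.num * q.den : ℤ) : ℚ) = q * (q.den : ℚ) ^ 2 := by
  push_cast
  rw [sq, ← mul_assoc, Rat.mul_den_eq_num]

theorem IsLocallyHilbertTrivial.isHilbertTrivial {a b : ℚ} (ha : a ≠ 0) (hb : b ≠ 0)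
    (h : IsLocallyHilbertTrivial a b) : IsHilbertTrivial a b := by
  have hiff (K : Type) [Field K] [CharZero K] :
      IsHilbertTrivial (((a.num * a.den : ℤ) : ℚ) : K) ((b.num * b.den : ℤ) : ℚ) ↔
        IsHilbertTrivial (a : K) b := by
    rw [num_mul_den_eq_mul_den_sq, num_mul_den_eq_mul_den_sq]
    push_cast
    rw [IsHilbertTrivial.mul_sq_right_iff (by simp), IsHilbertTrivial.mul_sq_left_iff (by simp)]
  have hint := (h.imp fun K _ _ ↦ (hiff K).2).isHilbertTrivial_intCast (by simp [ha]) (by simp [hb])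
  simpa only [Rat.cast_id] using (hiff ℚ).1 hint

/-! ### Ternary forms -/

lemma weight_ne_zero_of_anisotropic {R ι : Type*} [CommRing R] [Nontrivial R] [Fintype ι]
    {w : ι → R} (h : (weightedSumSquares R w).Anisotropic) (i : ι) : w i ≠ 0 := by
  classical
  intro hi
  have : Pi.single i (1 : R) = 0 := h _ (by simp [weightedSumSquares_apply, Pi.single_apply, hi])
  simpa using congrFun this i

section Diagonal

variable {K : Type*} [Field K] {w : Fin 3 → K}

lemma not_isHilbertTrivial_of_anisotropic (h : (weightedSumSquares K w).Anisotropic) :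
    ¬ IsHilbertTrivial (-(w 0 * w 1)) (-(w 0 * w 2)) := by
  rintro ⟨x, y, z, h0, hxyz⟩
  have hv : ![x, w 0 * y, w 0 * z] = 0 := h _ (by
    rw [weightedSumSquares_apply, Fin.sum_univ_three]
    simp only [smul_eq_mul, Matrix.cons_val]
    linear_combination w 0 * hxyz)
  simp_all [weight_ne_zero_of_anisotropic h 0]

lemma isHilbertTrivial_of_weightedSumSquares_eq {v : Fin 3 → K} {s : K} (hs : s ≠ 0)
    (h : weightedSumSquares K w v = -(w 0 * w 1 * w 2) * s ^ 2) :
    IsHilbertTrivial (-(w 0 * w 1)) (-(w 0 * w 2)) := by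
  simp only [weightedSumSquares_apply, Fin.sum_univ_three, smul_eq_mul] at h
  exact .of_quaternion_norm_eq_zero (x := w 0 * v 0) (y := v 1) (z := v 2) hs
    (by linear_combination w 0 * h)

lemma nonneg_or_nonneg_of_indefinite [LinearOrder K] [IsStrictOrderedRing K]
    (hpos : ∃ v, 0 < weightedSumSquares K w v) (hneg : ∃ v, weightedSumSquares K w v < 0) :
    0 ≤ -(w 0 * w 1) ∨ 0 ≤ -(w 0 * w 2) := by
  by_contra! hlt
  have hmul (v : Fin 3 → K) : 0 ≤ w 0 * weightedSumSquares K w v := by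
    have heq : w 0 * weightedSumSquares K w v =
        (w 0 * v 0) ^ 2 + w 0 * w 1 * v 1 ^ 2 + w 0 * w 2 * v 2 ^ 2 := by
      simp only [weightedSumSquares_apply, Fin.sum_univ_three, smul_eq_mul]
      ring
    have h1 : 0 < w 0 * w 1 := by linarith
    have h2 : 0 < w 0 * w 2 := by linarith
    rw [heq]
    positivity
  obtain ⟨u, hu⟩ := hpos
  obtain ⟨v, hv⟩ := hneg
  have h0 : w 0 = 0 := le_antisymm (nonpos_of_mul_nonneg_left (hmul v) hv)
    (nonneg_of_mul_nonneg_left (hmul u) hu)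
  simp [h0] at hlt

end Diagonal

lemma exists_padic_square_class_nonrepresented_weightedSumSquares {w : Fin 3 → ℚ}
    (h : (weightedSumSquares ℚ w).Anisotropic) (hpos : ∃ v, 0 < weightedSumSquares ℚ w v)
    (hneg : ∃ v, weightedSumSquares ℚ w v < 0) :
    ∃ (p : ℕ) (_ : Fact p.Prime), ∀ u : ℚ, u ≠ 0 → IsSquare (u : ℚ_[p]) →
      ∀ v, weightedSumSquares ℚ w v ≠ -(w 0 * w 1 * w 2) * u := by
  have hw := weight_ne_zero_of_anisotropic h
  have hreal : IsHilbertTrivial ((-(w 0 * w 1) : ℚ) : ℝ) (-(w 0 * w 2) : ℚ) :=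
    isHilbertTrivial_real_iff.2 (mod_cast nonneg_or_nonneg_of_indefinite hpos hneg)
  obtain ⟨p, hp, hlocal⟩ : ∃ (p : ℕ) (_ : Fact p.Prime),
      ¬ IsHilbertTrivial ((-(w 0 * w 1) : ℚ) : ℚ_[p]) (-(w 0 * w 2) : ℚ) := by
    by_contra! hall
    exact not_isHilbertTrivial_of_anisotropic h (IsLocallyHilbertTrivial.isHilbertTrivial
      (by simp [hw]) (by simp [hw]) ⟨hreal, hall⟩)
  refine ⟨p, hp, fun u hu0 ⟨s, hs⟩ v hv ↦ hlocal ?_⟩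
  have hs0 : s ≠ 0 := by
    rintro rfl
    simp [hu0] at hs
  have hcast : weightedSumSquares ℚ_[p] (fun i ↦ (w i : ℚ_[p])) (fun i ↦ (v i : ℚ_[p])) =
      -(w 0 * w 1 * w 2) * s ^ 2 := by
    rw [sq, ← hs]
    simp only [weightedSumSquares_apply, smul_eq_mul] at hv ⊢
    exact_mod_cast congrArg (Rat.cast (K := ℚ_[p])) hv
  simpa using isHilbertTrivial_of_weightedSumSquares_eq hs0 hcast

section QuadraticForm

variable {V : Type*} [AddCommGroup V] [Module ℚ V] {Q : QuadraticForm ℚ V}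

theorem exists_padic_square_class_nonrepresented (hV : Module.finrank ℚ V = 3) (hQ : Q.Anisotropic)
    (hpos : ∃ v, 0 < Q v) (hneg : ∃ v, Q v < 0) :
    ∃ (d : ℚ) (p : ℕ) (_ : Fact p.Prime), d ≠ 0 ∧
      ∀ u : ℚ, u ≠ 0 → IsSquare (u : ℚ_[p]) → ∀ v, Q v ≠ d * u := by
  have : Module.Finite ℚ V := Module.finite_of_finrank_eq_succ hV
  have hdiag := QuadraticForm.equivalent_weightedSumSquares Q
  rw [hV] at hdiag
  obtain ⟨w, ⟨e⟩⟩ := hdiag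
  have haniso : (weightedSumSquares ℚ w).Anisotropic := fun v hv ↦ by
    simpa using hQ (e.symm v) (by simpa using hv)
  obtain ⟨p, hp, H⟩ := exists_padic_square_class_nonrepresented_weightedSumSquares haniso
    (hpos.imp' e fun v hv ↦ by simpa using hv) (hneg.imp' e fun v hv ↦ by simpa using hv)
  have hw := weight_ne_zero_of_anisotropic haniso
  exact ⟨-(w 0 * w 1 * w 2), p, hp, by simp [hw], fun u hu0 hu v ↦ by simpa using H u hu0 hu (e v)⟩

lemma exists_nonrepresented_pos_and_neg (hV : Module.finrank ℚ V = 3) (hQ : Q.Anisotropic)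
    (hpos : ∃ v, 0 < Q v) (hneg : ∃ v, Q v < 0) :
    (∃ q, 0 < q ∧ ¬ ∃ v, Q v = q) ∧ ∃ q < 0, ¬ ∃ v, Q v = q := by
  obtain ⟨d, p, hp, hd, H⟩ := exists_padic_square_class_nonrepresented hV hQ hpos hneg
  have hp1 : (1 : ℚ) < p := mod_cast hp.out.one_lt
  have hlt : 1 - 4 * (p : ℚ) < 0 := by linarith
  have h1 : ¬ ∃ v, Q v = d := by simpa using H 1
  have h2 : ¬ ∃ v, Q v = d * (1 - 4 * p) := by
    simpa using H _ hlt.ne (by simpa using isSquare_padic_one_sub_four_mul)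
  rcases hd.lt_or_gt with hd | hd
  · exact ⟨⟨_, mul_pos_of_neg_of_neg hd hlt, h2⟩, ⟨_, hd, h1⟩⟩
  · exact ⟨⟨_, hd, h1⟩, ⟨_, mul_neg_of_pos_of_neg hd hlt, h2⟩⟩

end QuadraticForm

lemma infinite_of_mul_sq_mem {R : Type*} [CommRing R] [IsDomain R] [CharZero R] {S : Set R}
    (hS : ∀ q ∈ S, ∀ t : R, t ≠ 0 → q * t ^ 2 ∈ S) {q : R} (hq : q ∈ S) (hq0 : q ≠ 0) :
    S.Infinite := by
  refine Set.infinite_of_injective_forall_mem (f := fun n : ℕ ↦ q * ((n : R) + 1) ^ 2)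
    (fun m n hmn ↦ ?_) fun n ↦ hS q hq _ n.cast_add_one_ne_zero
  have hsq : (m + 1) ^ 2 = (n + 1) ^ 2 := by
    exact_mod_cast mul_left_cancel₀ hq0 (show q * _ = q * _ from hmn)
  simpa using hsq

lemma not_exists_eq_mul_sq {K V : Type*} [Field K] [AddCommGroup V] [Module K V]
    {Q : QuadraticForm K V} {q t : K} (ht : t ≠ 0) (h : ¬ ∃ v, Q v = q) :
    ¬ ∃ v, Q v = q * t ^ 2 := by
  rintro ⟨v, hv⟩
  exact h ⟨t⁻¹ • v, by rw [QuadraticMap.map_smul, hv, smul_eq_mul]; field_simp⟩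

lemma exists_rat_dotProduct_mulVec_mem {n : Type*} [Fintype n] (F : Matrix n n ℚ) {U : Set ℝ}
    (hU : IsOpen U) (h : ∃ v : n → ℝ, v ⬝ᵥ (F.map (Rat.cast : ℚ → ℝ)).mulVec v ∈ U) :
    ∃ v : n → ℚ, ((v ⬝ᵥ F.mulVec v : ℚ) : ℝ) ∈ U := by
  have hdense : DenseRange (Pi.map fun _ : n ↦ (Rat.cast : ℚ → ℝ)) :=
    .piMap fun _ ↦ Rat.denseRange_cast
  have hcont : Continuous fun v : n → ℝ ↦ v ⬝ᵥ (F.map (Rat.cast : ℚ → ℝ)).mulVec v := by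
    fun_prop
  obtain ⟨v, hv⟩ := hdense.exists_mem_open (hU.preimage hcont) h
  exact ⟨v, by simpa [dotProduct, mulVec] using hv⟩

theorem infinitely_many_nonrepresented_general {V : Type*} [AddCommGroup V] [Module ℚ V]
    (hV : Module.finrank ℚ V = 3) {Q : QuadraticForm ℚ V} (hQ : Q.Anisotropic)
    (hpos : ∃ v, 0 < Q v) (hneg : ∃ v, Q v < 0) :
    {q : ℚ | 0 < q ∧ ¬ ∃ v, Q v = q}.Infinite ∧ {q : ℚ | q < 0 ∧ ¬ ∃ v, Q v = q}.Infinite := by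
  obtain ⟨⟨q, hq, hqQ⟩, ⟨r, hr, hrQ⟩⟩ := exists_nonrepresented_pos_and_neg hV hQ hpos hneg
  constructor
  · exact infinite_of_mul_sq_mem (fun q hq t ht ↦
      ⟨mul_pos hq.1 (by positivity), not_exists_eq_mul_sq ht hq.2⟩) ⟨hq, hqQ⟩ hq.ne'
  · exact infinite_of_mul_sq_mem (fun r hr t ht ↦
      ⟨mul_neg_of_neg_of_pos hr.1 (by positivity), not_exists_eq_mul_sq ht hr.2⟩) ⟨hr, hrQ⟩ hr.ne

theorem infinitely_many_nonrepresented
    (F : Matrix (Fin 3) (Fin 3) ℚ) (hF : F.IsSymm) (hFdet : F.det ≠ 0)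
    (hindef : (∃ v : Fin 3 → ℝ, 0 < v ⬝ᵥ (F.map (Rat.cast : ℚ → ℝ)).mulVec v) ∧
      (∃ v : Fin 3 → ℝ, v ⬝ᵥ (F.map (Rat.cast : ℚ → ℝ)).mulVec v < 0))
    (haniso : ∀ v : Fin 3 → ℚ, v ⬝ᵥ F.mulVec v = 0 → v = 0) :
    {q : ℚ | 0 < q ∧ ¬ ∃ v : Fin 3 → ℚ, v ⬝ᵥ F.mulVec v = q}.Infinite ∧
    {q : ℚ | q < 0 ∧ ¬ ∃ v : Fin 3 → ℚ, v ⬝ᵥ F.mulVec v = q}.Infinite := by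
  have hQ (v : Fin 3 → ℚ) : F.toQuadraticForm' v = v ⬝ᵥ F.mulVec v := by
    simp [toQuadraticForm', toLinearMap₂'_apply']
  have hpos : ∃ v : Fin 3 → ℚ, 0 < v ⬝ᵥ F.mulVec v := by
    simpa using exists_rat_dotProduct_mulVec_mem F isOpen_Ioi hindef.1
  have hneg : ∃ v : Fin 3 → ℚ, v ⬝ᵥ F.mulVec v < 0 := by
    simpa using exists_rat_dotProduct_mulVec_mem F isOpen_Iio hindef.2
  simp only [← hQ] at haniso hpos hneg ⊢
  exact infinitely_many_nonrepresented_general (by simp) haniso hpos hneg
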